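/- arXiv:2406.02971 — 2 statements merged into one kernel-verified Lean document; each statement's English description precedes it below -/
import Mathlib

section
/- For every k ≥ 2 there exist real constants c₁, c₂ such that for all n ≥ 1 and every word w of length n over an alphabet of size k: log₂(1 + 1/k) · n − (1/2)·log₂ n + c₁ ≤ minS_k(n) ≤ S(w) ≤ n − (1/2)·log₂ n + c₂. -/
/-!
Fix a word `w` of length `n` over an alphabet with `k` letters. The `n.choose m` position sets of
size `m` are distributed among the words of length `m` (`occ_eq_count_sublistsLen`).

*Upper bound.* Hence `occ w u ≤ n.choose |u|`, and every binomial coefficient of `n` is at most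
`2 ^ n / √n` (`choose_sq_mul_le`).

*Lower bound.* There are at most `k ^ m` words of length `m`, so by pigeonhole some `u` has
`occ w u ≥ n.choose m / k ^ m` (`choose_le_pow_mul_maxocc`). Divided by their sum `(1 + 1 / k) ^ n`,
the numbers `n.choose m / k ^ m` are the weights of the binomial distribution with parameters `n`
and `1 / (k + 1)`. By Chebyshev, most of the mass of that distribution lies in a window of width
`2 √n`, so some weight is at least `1 / (8 √n)` (`exists_large_binomial_weight`).
-/

open List Real

/-- `occ w u` is the number of occurrences of `u` as a subword (subsequence) of `w`,
i.e. the multiplicity of `u` among the `2^|w|` sublists of `w`. -/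
def occ {α : Type*} [DecidableEq α] (w u : List α) : ℕ := w.sublists.count u

/-- `maxocc w` is the maximal number of occurrences of any subword of `w`. -/
noncomputable def maxocc {α : Type*} [DecidableEq α] (w : List α) : ℕ :=
  sSup {n : ℕ | ∃ u : List α, occ w u = n}

/-- `minS k n` is the minimal subword entropy `log₂ (maxocc w)` over words `w`
of length `n` over the alphabet `Fin k`. -/
noncomputable def minS (k n : ℕ) : ℝ :=
  sInf {s : ℝ | ∃ w : List (Fin k), w.length = n ∧ s = Real.logb 2 (maxocc w)}

/-! ### Counting occurrences -/

theorem count_map_cons_eq {α : Type*} [DecidableEq α] (a b : α) (u : List α)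
    (L : List (List α)) :
    (L.map (List.cons a)).count (b :: u) = if a = b then L.count u else 0 := by
  split_ifs with h
  · subst h
    exact List.count_map_of_injective L _ List.cons_injective u
  · rw [List.count_eq_zero]
    simp [h]

theorem occ_eq_count_sublistsLen {α : Type*} [DecidableEq α] (w u : List α) :
    occ w u = (List.sublistsLen u.length w).count u := by
  unfold occ
  rw [(List.sublists_perm_sublists' w).count_eq]
  induction w generalizing u with
  | nil => cases u <;> simp
  | cons a w ih =>
    cases u with
    | nil =>
      have h := ih []
      have h0 : ((w.sublists').map (List.cons a)).count [] = 0 := by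
        rw [List.count_eq_zero]; simp
      rw [List.sublists'_cons, List.count_append, h, h0]
      simp
    | cons b u =>
      rw [List.sublists'_cons, List.count_append, ih (b :: u), count_map_cons_eq, ih u,
        List.length_cons, List.sublistsLen_succ_cons, List.count_append, count_map_cons_eq]

theorem occ_le_choose {α : Type*} [DecidableEq α] (w u : List α) :
    occ w u ≤ w.length.choose u.length := by
  rw [occ_eq_count_sublistsLen, ← List.length_sublistsLen]
  exact List.count_le_length

theorem bddAbove_occ {α : Type*} [DecidableEq α] (w : List α) :
    BddAbove {n : ℕ | ∃ u : List α, occ w u = n} := by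
  refine ⟨w.sublists.length, ?_⟩
  rintro _ ⟨u, rfl⟩
  exact List.count_le_length

theorem occ_le_maxocc {α : Type*} [DecidableEq α] (w u : List α) : occ w u ≤ maxocc w :=
  le_csSup (bddAbove_occ w) ⟨u, rfl⟩

theorem exists_occ_eq_maxocc {α : Type*} [DecidableEq α] (w : List α) :
    ∃ u, occ w u = maxocc w :=
  Nat.sSup_mem (s := {n : ℕ | ∃ u : List α, occ w u = n}) ⟨_, [], rfl⟩ (bddAbove_occ w)

theorem maxocc_pos {α : Type*} [DecidableEq α] (w : List α) : 0 < maxocc w := by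
  refine lt_of_lt_of_le ?_ (occ_le_maxocc w [])
  rw [occ_eq_count_sublistsLen]
  simp

/-- Pigeonhole: the `|w|.choose m` subwords of length `m` fall into at most `k ^ m` classes. -/
theorem choose_le_pow_mul_maxocc {k : ℕ} (w : List (Fin k)) (m : ℕ) :
    w.length.choose m ≤ k ^ m * maxocc w := by
  set L := List.sublistsLen m w with hL
  have hlen : ∀ u ∈ L, u.length = m := fun u hu => List.length_of_sublistsLen hu
  have hcard : L.toFinset.card ≤ k ^ m := by
    have hsub : L.toFinset ⊆
        (Finset.univ : Finset (Fin m → Fin k)).image (fun f => List.ofFn f) := by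
      intro u hu
      have hu' := hlen u (List.mem_toFinset.1 hu)
      subst hu'
      exact Finset.mem_image.2 ⟨u.get, Finset.mem_univ _, List.ofFn_get u⟩
    calc L.toFinset.card ≤ _ := Finset.card_le_card hsub
      _ ≤ _ := Finset.card_image_le
      _ = k ^ m := by simp
  calc w.length.choose m = L.length := (List.length_sublistsLen m w).symm
    _ = ∑ u ∈ L.toFinset, L.count u := by
        rw [← List.sum_toFinset_count_eq_length L]
        -- The two sides differ only in the (lawful) boolean equality on words.
        refine Finset.sum_congr rfl fun u _ => ?_
        congr 1
        exact lawful_beq_subsingleton _ _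
    _ ≤ ∑ u ∈ L.toFinset, maxocc w := by
        refine Finset.sum_le_sum fun u hu => ?_
        have hu' := hlen u (List.mem_toFinset.1 hu)
        have := occ_le_maxocc w u
        rwa [occ_eq_count_sublistsLen, hu'] at this
    _ = L.toFinset.card * maxocc w := by simp
    _ ≤ _ := Nat.mul_le_mul_right _ hcard

/-! ### Bounds on binomial coefficients and binomial weights -/

theorem centralBinom_sq_mul_le (m : ℕ) : m.centralBinom ^ 2 * (2 * m + 1) ≤ 16 ^ m := by
  induction m with
  | zero => simp
  | succ m ih =>
    have h := Nat.succ_mul_centralBinom_succ m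
    have hp : 0 < (m + 1) ^ 2 := by positivity
    refine Nat.le_of_mul_le_mul_left ?_ hp
    calc (m + 1) ^ 2 * ((m + 1).centralBinom ^ 2 * (2 * (m + 1) + 1))
        = ((m + 1) * (m + 1).centralBinom) ^ 2 * (2 * m + 3) := by ring
      _ = 4 * ((2 * m + 1) * (2 * m + 3)) * (m.centralBinom ^ 2 * (2 * m + 1)) := by
          rw [h]; ring
      _ ≤ 4 * (4 * (m + 1) ^ 2) * 16 ^ m := by
          have h1 : (2 * m + 1) * (2 * m + 3) ≤ 4 * (m + 1) ^ 2 := by nlinarith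
          exact Nat.mul_le_mul (Nat.mul_le_mul_left 4 h1) ih
      _ = (m + 1) ^ 2 * 16 ^ (m + 1) := by ring

theorem choose_sq_mul_le (n j : ℕ) : n.choose j ^ 2 * n ≤ 4 ^ n := by
  have hmid : n.choose (n / 2) ^ 2 * n ≤ 4 ^ n := by
    obtain ⟨m, rfl | rfl⟩ := Nat.even_or_odd' n
    · have h := centralBinom_sq_mul_le m
      rw [Nat.centralBinom_eq_two_mul_choose] at h
      rw [Nat.mul_div_cancel_left m two_pos, pow_mul]
      norm_num
      nlinarith [Nat.zero_le ((2 * m).choose m ^ 2)]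
    · have h := centralBinom_sq_mul_le (m + 1)
      -- The middle coefficient of an odd row is half the central one of the next row.
      have h2 : (m + 1).centralBinom = 2 * (2 * m + 1).choose m := by
        rw [Nat.centralBinom_eq_two_mul_choose, show 2 * (m + 1) = (2 * m + 1) + 1 by ring,
          Nat.choose_succ_succ, Nat.choose_symm_half]
        ring
      rw [h2] at h
      have hd : (2 * m + 1) / 2 = m := by omega
      have e1 : (4 : ℕ) ^ (2 * m + 1) = 4 * 16 ^ m := by
        rw [pow_succ, pow_mul]; norm_num; ring
      rw [hd, e1]
      rw [pow_succ 16, mul_pow] at h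
      nlinarith [Nat.zero_le ((2 * m + 1).choose m ^ 2)]
  refine le_trans ?_ hmid
  gcongr
  exact Nat.choose_le_middle j n

theorem card_window_le (n : ℕ) (y s : ℝ) (hs : 0 ≤ s) (hy : 0 ≤ y) :
    (((Finset.range (n + 1)).filter (fun j : ℕ => |y - j| < s)).card : ℝ) ≤ 2 * s + 1 := by
  have hsub : (Finset.range (n + 1)).filter (fun j : ℕ => |y - j| < s) ⊆
      Finset.Icc ⌈y - s⌉₊ ⌊y + s⌋₊ := by
    intro j hj
    have h := abs_lt.1 (Finset.mem_filter.1 hj).2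
    rw [Finset.mem_Icc]
    exact ⟨Nat.ceil_le.2 (by linarith), Nat.le_floor (by linarith)⟩
  have hc := Finset.card_le_card hsub
  rw [Nat.card_Icc] at hc
  have h1 : y - s ≤ ⌈y - s⌉₊ := Nat.le_ceil _
  have h2 : (⌊y + s⌋₊ : ℝ) ≤ y + s := Nat.floor_le (by linarith)
  rcases le_total ⌈y - s⌉₊ (⌊y + s⌋₊ + 1) with h | h
  · have hc' : (((Finset.range (n + 1)).filter (fun j : ℕ => |y - j| < s)).card : ℝ) ≤
        ((⌊y + s⌋₊ + 1 - ⌈y - s⌉₊ : ℕ) : ℝ) := by exact_mod_cast hc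
    rw [Nat.cast_sub h] at hc'
    push_cast at hc'
    linarith
  · rw [Nat.sub_eq_zero_of_le h] at hc
    have : ((Finset.range (n + 1)).filter (fun j : ℕ => |y - j| < s)).card = 0 := by omega
    rw [this]
    push_cast
    linarith

/-- The largest weight of a binomial distribution is of order at least `1 / √n`, by Chebyshev's
inequality with deviation `√n`: outside the window `|n x - j| < √n` the mass is at most
`x (1 - x) ≤ 1 / 4`, and the window holds at most `3 √n` integers. -/
theorem exists_large_binomial_weight (n : ℕ) (hn : 1 ≤ n) (x : ℝ) (hx0 : 0 ≤ x) (hx1 : x ≤ 1) :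
    ∃ j ≤ n, 1 / (8 * √n) ≤ n.choose j * x ^ j * (1 - x) ^ (n - j) := by
  by_contra! hcon
  set b : ℕ → ℝ := fun j => n.choose j * x ^ j * (1 - x) ^ (n - j) with hb
  have hb0 : ∀ j, 0 ≤ b j := fun j => by
    have : 0 ≤ 1 - x := by linarith
    simp only [hb]
    positivity
  have hsum : ∑ j ∈ Finset.range (n + 1), b j = 1 := by
    have := congrArg (Polynomial.eval x) (bernsteinPolynomial.sum ℝ n)
    simpa [Polynomial.eval_finsetSum, bernsteinPolynomial, hb] using this
  have hvar : ∑ j ∈ Finset.range (n + 1), (n * x - j) ^ 2 * b j = n * x * (1 - x) := by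
    have := congrArg (Polynomial.eval x) (bernsteinPolynomial.variance ℝ n)
    simpa [Polynomial.eval_finsetSum, bernsteinPolynomial, hb] using this
  have hn' : (1 : ℝ) ≤ n := by exact_mod_cast hn
  have hs1 : 1 ≤ √(n : ℝ) := Real.one_le_sqrt.2 hn'
  have hsq : √(n : ℝ) ^ 2 = n := Real.sq_sqrt (by linarith)
  have hterm : ∀ j ∈ Finset.range (n + 1), b j ≤
      (if |n * x - j| < √n then 1 / (8 * √n) else 0) + (n * x - j) ^ 2 * b j / n := by
    intro j hj
    have hj' : j ≤ n := Nat.lt_succ_iff.1 (Finset.mem_range.1 hj)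
    split_ifs with h
    · have h1 := (hcon j hj').le
      have h2 : 0 ≤ (n * x - j) ^ 2 * b j / n := by
        have := hb0 j
        positivity
      have h3 : b j ≤ 1 / (8 * √n) := h1
      linarith
    · push Not at h
      have h1 : (n : ℝ) ≤ (n * x - j) ^ 2 := by
        calc (n : ℝ) = √(n : ℝ) ^ 2 := hsq.symm
          _ ≤ |n * x - j| ^ 2 := by gcongr
          _ = (n * x - j) ^ 2 := sq_abs _
      rw [zero_add, le_div_iff₀ (by linarith)]
      nlinarith [hb0 j]
  have htot := Finset.sum_le_sum hterm
  rw [hsum, Finset.sum_add_distrib, ← Finset.sum_div, hvar, ← Finset.sum_filter,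
    Finset.sum_const, nsmul_eq_mul] at htot
  have hcard := card_window_le n (n * x) (√n) (by linarith) (by positivity)
  have hA : (((Finset.range (n + 1)).filter (fun j : ℕ => |n * x - j| < √n)).card : ℝ) *
      (1 / (8 * √n)) ≤ 3 / 8 := by
    rw [mul_one_div, div_le_div_iff₀ (by linarith) (by norm_num)]
    linarith
  have hB : n * x * (1 - x) / n ≤ 1 / 4 := by
    rw [mul_assoc, mul_div_cancel_left₀ _ (by linarith)]
    nlinarith [sq_nonneg (x - 1 / 2)]
  linarith

/-! ### Bounds on `maxocc` -/

theorem maxocc_lower {k : ℕ} (hk : 2 ≤ k) (w : List (Fin k)) (hn : 1 ≤ w.length) :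
    (1 + 1 / (k : ℝ)) ^ w.length / (8 * √w.length) ≤ maxocc w := by
  have hk0 : (0 : ℝ) < k := by exact_mod_cast (by omega : 0 < k)
  obtain ⟨j, hj, h⟩ := exists_large_binomial_weight w.length hn (1 / (k + 1 : ℝ)) (by positivity)
    (by rw [div_le_one (by linarith)]; linarith)
  set n := w.length with hnw
  have hc : (n.choose j : ℝ) ≤ k ^ j * maxocc w := by
    exact_mod_cast choose_le_pow_mul_maxocc w j
  have e1 : (1 : ℝ) - 1 / (k + 1) = k / (k + 1) := by field_simp; ring
  have e2 : (1 : ℝ) + 1 / k = (k + 1) / k := by field_simp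
  rw [e1] at h
  have h2 : 1 / (8 * √n) ≤ maxocc w * (k / (k + 1 : ℝ)) ^ n := by
    refine h.trans ?_
    calc (n.choose j : ℝ) * (1 / (k + 1 : ℝ)) ^ j * (k / (k + 1 : ℝ)) ^ (n - j)
        ≤ (k ^ j * maxocc w) * (1 / (k + 1 : ℝ)) ^ j * (k / (k + 1 : ℝ)) ^ (n - j) := by
          gcongr
      _ = maxocc w * ((k / (k + 1 : ℝ)) ^ j * (k / (k + 1 : ℝ)) ^ (n - j)) := by
          rw [div_pow (k : ℝ) _ j, div_pow (1 : ℝ), one_pow]; ring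
      _ = _ := by rw [← pow_add, Nat.add_sub_cancel' hj]
  calc (1 + 1 / (k : ℝ)) ^ n / (8 * √n) = ((k + 1) / k : ℝ) ^ n * (1 / (8 * √n)) := by
        rw [e2]; ring
    _ ≤ ((k + 1) / k : ℝ) ^ n * (maxocc w * (k / (k + 1 : ℝ)) ^ n) := by gcongr
    _ = maxocc w * (((k + 1) / k : ℝ) * (k / (k + 1 : ℝ))) ^ n := by rw [mul_pow]; ring
    _ = maxocc w := by
        have : ((k + 1) / k : ℝ) * (k / (k + 1 : ℝ)) = 1 := by field_simp
        rw [this]; simp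

theorem maxocc_upper {α : Type*} [DecidableEq α] (w : List α) (hn : 1 ≤ w.length) :
    (maxocc w : ℝ) ≤ 2 ^ w.length / √w.length := by
  obtain ⟨u, hu⟩ := exists_occ_eq_maxocc w
  have h1 : maxocc w ≤ w.length.choose u.length := hu ▸ occ_le_choose w u
  have h2 : maxocc w ^ 2 * w.length ≤ 4 ^ w.length :=
    le_trans (by gcongr) (choose_sq_mul_le w.length u.length)
  have h3 : (maxocc w : ℝ) ^ 2 * w.length ≤ 4 ^ w.length := by exact_mod_cast h2
  have hn' : (0 : ℝ) < w.length := by exact_mod_cast hn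
  rw [le_div_iff₀ (Real.sqrt_pos.2 hn')]
  refine abs_le_of_sq_le_sq' ?_ (by positivity) |>.2
  rw [mul_pow, Real.sq_sqrt hn'.le, ← pow_mul, mul_comm _ 2, pow_mul]
  norm_num
  exact h3

theorem logb_sqrt_eq (n : ℕ) : Real.logb 2 √(n : ℝ) = (1 / 2) * Real.logb 2 n := by
  rw [Real.logb, Real.log_sqrt (by positivity), Real.logb]
  ring

theorem stmt_4 (k : ℕ) (hk : 2 ≤ k) :
    ∃ c₁ c₂ : ℝ, ∀ n : ℕ, 1 ≤ n → ∀ w : List (Fin k), w.length = n →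
      Real.logb 2 (1 + 1 / k) * n - (1 / 2) * Real.logb 2 n + c₁ ≤ minS k n ∧
      minS k n ≤ Real.logb 2 (maxocc w) ∧
      Real.logb 2 (maxocc w) ≤ n - (1 / 2) * Real.logb 2 n + c₂ := by
  refine ⟨-Real.logb 2 8, 0, fun n hn w hw => ⟨?_, ?_, ?_⟩⟩
  · refine le_csInf ⟨_, w, hw, rfl⟩ ?_
    rintro _ ⟨v, rfl, rfl⟩
    have h := maxocc_lower hk v hn
    have hn' : (0 : ℝ) < √v.length := Real.sqrt_pos.2 (by exact_mod_cast hn)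
    have hk1 : (0 : ℝ) < 1 + 1 / k := by positivity
    have h2 := Real.logb_le_logb_of_le one_lt_two (by positivity) h
    rw [Real.logb_div (by positivity) (by positivity), Real.logb_mul (by norm_num) hn'.ne',
      Real.logb_pow, logb_sqrt_eq] at h2
    linarith
  · refine csInf_le ⟨0, ?_⟩ ⟨w, hw, rfl⟩
    rintro _ ⟨v, -, rfl⟩
    exact Real.logb_nonneg one_lt_two (by exact_mod_cast maxocc_pos v)
  · subst hw
    have hn' : (0 : ℝ) < √w.length := Real.sqrt_pos.2 (by exact_mod_cast hn)
    have h2 := Real.logb_le_logb_of_le one_lt_two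
      (by exact_mod_cast maxocc_pos w) (maxocc_upper w hn)
    rw [Real.logb_div (by positivity) hn'.ne', Real.logb_pow, logb_sqrt_eq,
      Real.logb_self_eq_one one_lt_two] at h2
    linarith
end

section
/- For all m, r ≥ 0, occ((0011)^m, (01)^r) = 4^r · C(m + r, 2r), where C denotes the binomial coefficient (so in particular the count is 0 when r > m). -/
/-!
Scan the word `(0011)^m` from the left. Besides `A(m, r) = occ((0011)^m, (01)^r)`, consider
`B(m, r) = occ((0011)^m, 1(01)^r)`. Whether the first letter of the word is used gives a recursion
for `occ` (`occ_cons_self`, `occ_cons_ne`), and peeling off one block `0011` turns it into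
`B(m+1, r) = B(m, r) + 2 A(m, r)` and `A(m+1, r+1) = A(m, r+1) + 2 B(m+1, r)`.
By Pascal's rule these are solved by `A(m, r) = 4^r C(m+r, 2r)` and
`B(m, r) = 2 * 4^r C(m+r, 2r+1)`, which are proved simultaneously by induction on `m`
(`occ_block_aux`).
-/

open List Real

/-- `rep v m` is the concatenation of `m` copies of the word `v`. -/
def rep {α : Type*} (v : List α) (m : ℕ) : List α := (List.replicate m v).flatten

theorem occ_eq_count_sublists' {α : Type*} [DecidableEq α] (w u : List α) :
    occ w u = w.sublists'.count u :=
  (List.sublists_perm_sublists' w).count_eq u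

theorem occ_nil_right {α : Type*} [DecidableEq α] (w : List α) : occ w [] = 1 := by
  rw [occ_eq_count_sublists']
  induction w with
  | nil => simp
  | cons a w ih =>
    rw [List.sublists'_cons, List.count_append, ih, List.count_eq_zero_of_not_mem (by simp)]

theorem occ_nil_cons {α : Type*} [DecidableEq α] (b : α) (u : List α) :
    occ [] (b :: u) = 0 := by
  simp [occ]

theorem occ_cons_self {α : Type*} [DecidableEq α] (a : α) (w u : List α) :
    occ (a :: w) (a :: u) = occ w (a :: u) + occ w u := by
  simp only [occ_eq_count_sublists']
  rw [List.sublists'_cons, List.count_append,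
    List.count_map_of_injective _ _ List.cons_injective]

theorem occ_cons_ne {α : Type*} [DecidableEq α] {a b : α} (h : a ≠ b) (w u : List α) :
    occ (a :: w) (b :: u) = occ w (b :: u) := by
  simp only [occ_eq_count_sublists']
  rw [List.sublists'_cons, List.count_append,
    List.count_eq_zero_of_not_mem (l := w.sublists'.map (List.cons a)) (by simp [h]), add_zero]

theorem rep_zero {α : Type*} (v : List α) : rep v 0 = [] := rfl

theorem rep_succ {α : Type*} (v : List α) (m : ℕ) : rep v (m + 1) = v ++ rep v m := by
  simp [rep, List.replicate_succ]

/-- A leading `1` is useless for an occurrence of `(01)^r`, which is empty or starts with `0`. -/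
theorem occ_one_cons_rep (w : List (Fin 2)) (r : ℕ) :
    occ (1 :: w) (rep [0, 1] r) = occ w (rep [0, 1] r) := by
  cases r with
  | zero => simp only [rep_zero, occ_nil_right]
  | succ r =>
    rw [rep_succ]
    exact occ_cons_ne (by decide) _ _

theorem occ_block_one (w : List (Fin 2)) (r : ℕ) :
    occ ([0, 0, 1, 1] ++ w) (1 :: rep [0, 1] r) =
      occ w (1 :: rep [0, 1] r) + 2 * occ w (rep [0, 1] r) := by
  have h : (0 : Fin 2) ≠ 1 := by decide
  simp only [List.cons_append, List.nil_append]
  rw [occ_cons_ne h, occ_cons_ne h, occ_cons_self, occ_cons_self, occ_one_cons_rep]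
  ring

theorem occ_block_zero (w : List (Fin 2)) (r : ℕ) :
    occ ([0, 0, 1, 1] ++ w) (rep [0, 1] (r + 1)) =
      occ w (rep [0, 1] (r + 1)) + 2 * occ ([0, 0, 1, 1] ++ w) (1 :: rep [0, 1] r) := by
  have h : (0 : Fin 2) ≠ 1 := by decide
  simp only [rep_succ, List.cons_append, List.nil_append]
  rw [occ_cons_self, occ_cons_self, occ_cons_ne h.symm, occ_cons_ne h.symm, occ_cons_ne h,
    occ_cons_ne h, occ_cons_ne h]
  ring

/-- The closed forms for `(01)^r` and `1(01)^r`, proved simultaneously. -/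
theorem occ_block_aux (m : ℕ) : ∀ r : ℕ,
    occ (rep ([0, 0, 1, 1] : List (Fin 2)) m) (rep [0, 1] r) =
      4 ^ r * (m + r).choose (2 * r) ∧
    occ (rep ([0, 0, 1, 1] : List (Fin 2)) m) (1 :: rep [0, 1] r) =
      2 * 4 ^ r * (m + r).choose (2 * r + 1) := by
  induction m with
  | zero =>
    intro r
    rw [rep_zero, occ_nil_cons, Nat.choose_eq_zero_of_lt (by omega : 0 + r < 2 * r + 1)]
    refine ⟨?_, by simp⟩
    cases r with
    | zero => simp [rep_zero, occ_nil_right]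
    | succ r =>
      rw [Nat.choose_eq_zero_of_lt (by omega : 0 + (r + 1) < 2 * (r + 1)), rep_succ]
      exact occ_nil_cons _ _
  | succ m ih =>
    have hB : ∀ r : ℕ, occ (rep ([0, 0, 1, 1] : List (Fin 2)) (m + 1)) (1 :: rep [0, 1] r) =
        2 * 4 ^ r * (m + 1 + r).choose (2 * r + 1) := by
      intro r
      rw [rep_succ, occ_block_one, (ih r).1, (ih r).2, show m + 1 + r = (m + r) + 1 by ring,
        Nat.choose_succ_succ]
      ring
    intro r
    refine ⟨?_, hB r⟩
    cases r with
    | zero => simp [rep_zero, occ_nil_right]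
    | succ r =>
      have h := hB r
      rw [rep_succ] at h
      rw [rep_succ, occ_block_zero, h, (ih (r + 1)).1,
        show m + 1 + (r + 1) = (m + 1 + r) + 1 by ring,
        show m + (r + 1) = m + 1 + r by ring,
        show 2 * (r + 1) = (2 * r + 1) + 1 by ring, Nat.choose_succ_succ (m + 1 + r)]
      ring

theorem stmt_9 (m r : ℕ) :
    occ (rep ([0, 0, 1, 1] : List (Fin 2)) m) (rep [0, 1] r) =
      4 ^ r * (m + r).choose (2 * r) :=
  (occ_block_aux m r).1
end
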